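/- arXiv:2508.17680 — 2 statements merged into one kernel-verified Lean document; each statement's English description precedes it below -/
import Mathlib

section
/- Let f : (Fin n → ℝ) → ℝ be a function that is Fréchet differentiable at a point x, and for each i let v i = D f x (e i) denote the i-th partial derivative of f at x (the derivative applied to the i-th standard basis vector e i). Define g(ε) = sup over all δ with ‖δ‖∞ ≤ ε of |f(x + δ) − f(x)|. Then g(ε) = ε * ∑ i, |v i| + o(ε) as ε → 0⁺; that is, (g(ε) − ε * ∑ i, |v i|) / ε tends to 0 as ε tends to 0 from the right. (Precise form of the first-order approximation ΔL₀ ≈ ε‖∇ₓL(B[x])‖₁ in Eq. (10) of the paper.) -/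
/-- If `f` is Fréchet differentiable at `x` with partial derivatives `v i`, and
`g ε` is the supremum of `|f (x + δ) - f x|` over the closed `ℓ∞` ball `‖δ‖∞ ≤ ε`,
then `g ε = ε * ∑ i, |v i| + o(ε)` as `ε → 0⁺`. -/
theorem sup_loss_change_first_order (n : ℕ) (f : (Fin n → ℝ) → ℝ) (x : Fin n → ℝ)
    (hf : DifferentiableAt ℝ f x) (v : Fin n → ℝ)
    (hv : ∀ i, v i = fderiv ℝ f x (Pi.single i 1))
    (g : ℝ → ℝ)
    (hg : ∀ ε : ℝ, g ε =
      sSup {y : ℝ | ∃ δ : Fin n → ℝ, (⨆ i, |δ i|) ≤ ε ∧ y = |f (x + δ) - f x|}) :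
    Filter.Tendsto (fun ε : ℝ => (g ε - ε * ∑ i, |v i|) / ε)
      (nhdsWithin 0 (Set.Ioi 0)) (nhds 0) := by
  have hnorm : ∀ (δ : Fin n → ℝ) (ε : ℝ), 0 < ε → ((⨆ i, |δ i|) ≤ ε ↔ ∀ i, |δ i| ≤ ε) := by
    intro δ ε hε
    constructor
    · intro h i
      exact (le_ciSup (f := fun i => |δ i|) (Set.finite_range _).bddAbove i).trans h
    · intro h
      exact Real.iSup_le h hε.le
  have hD : ∀ δ : Fin n → ℝ, fderiv ℝ f x δ = ∑ i, δ i * v i := by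
    intro δ
    conv_lhs => rw [pi_eq_sum_univ' δ]
    rw [map_sum]
    refine Finset.sum_congr rfl fun i _ => ?_
    rw [map_smul, hv i, smul_eq_mul]
  rw [Metric.tendsto_nhdsWithin_nhds]
  intro c hc
  have h1 := hf.hasFDerivAt
  rw [hasFDerivAt_iff_isLittleO_nhds_zero] at h1
  have h2 := h1.def (half_pos hc)
  rw [Metric.eventually_nhds_iff] at h2
  obtain ⟨r, hr, h2⟩ := h2
  refine ⟨r, hr, ?_⟩
  intro ε hε hεr
  have hε0 : 0 < ε := hε
  have hεr' : ε < r := by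
    rw [Real.dist_eq, sub_zero, abs_of_pos hε0] at hεr
    exact hεr
  have h3 : ∀ δ : Fin n → ℝ, (∀ i, |δ i| ≤ ε) →
      |f (x + δ) - f x - ∑ i, δ i * v i| ≤ c / 2 * ε := by
    intro δ hδ
    have hn : ‖δ‖ ≤ ε := (pi_norm_le_iff_of_nonneg hε0.le).2 hδ
    have := h2 (y := δ) (by rw [dist_zero_right]; linarith)
    rw [Real.norm_eq_abs, hD] at this
    exact this.trans (mul_le_mul_of_nonneg_left hn (by linarith))
  set S := ∑ i, |v i| with hS
  have hub : ∀ y ∈ {y : ℝ | ∃ δ : Fin n → ℝ, (⨆ i, |δ i|) ≤ ε ∧ y = |f (x + δ) - f x|},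
      y ≤ ε * S + c / 2 * ε := by
    rintro y ⟨δ, hδ, rfl⟩
    have hδ' := (hnorm δ ε hε0).1 hδ
    have h4 := h3 δ hδ'
    have h5 : |∑ i, δ i * v i| ≤ ε * S := by
      rw [hS, Finset.mul_sum]
      refine (Finset.abs_sum_le_sum_abs _ _).trans (Finset.sum_le_sum fun i _ => ?_)
      rw [abs_mul]
      exact mul_le_mul_of_nonneg_right (hδ' i) (abs_nonneg _)
    rw [abs_le] at *
    constructor <;> linarith [h4.1, h4.2, h5.1, h5.2]
  have hup : g ε ≤ ε * S + c / 2 * ε := by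
    rw [hg]
    refine csSup_le ⟨_, 0, ?_, rfl⟩ hub
    exact (hnorm 0 ε hε0).2 (by intro i; simpa using hε0.le)
  have hlo : ε * S - c / 2 * ε ≤ g ε := by
    have hδ : ∀ i, |(fun i => ε * SignType.sign (v i) : Fin n → ℝ) i| ≤ ε := by
      intro i
      rcases lt_trichotomy (v i) 0 with h | h | h <;> simp [h, abs_of_pos hε0, hε0.le]
    have h4 := h3 _ hδ
    have h5 : ∑ i, (fun i => ε * SignType.sign (v i) : Fin n → ℝ) i * v i = ε * S := by
      rw [hS, Finset.mul_sum]
      refine Finset.sum_congr rfl fun i _ => ?_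
      simp only [mul_assoc, sign_mul_self]
    rw [h5] at h4
    have h6 := le_csSup ⟨_, hub⟩ ⟨_, (hnorm _ ε hε0).2 hδ, rfl⟩
    rw [← hg] at h6
    have h7 := (abs_le.1 h4).1
    linarith [le_abs_self (f (x + fun i => ε * SignType.sign (v i)) - f x)]
  rw [Real.dist_eq, sub_zero, abs_div, abs_of_pos hε0, div_lt_iff₀ hε0, abs_lt]
  have := mul_pos hc hε0
  constructor <;> linarith
end

section
/- Let f : (Fin m → ℝ) → ℝ be Fréchet differentiable at a point z with partial derivatives v i = D f z (e i), and let M be a real m × n matrix. Define h(ε) = sup over all δ : Fin n → ℝ with ‖δ‖∞ ≤ ε of |f(z + M.mulVec δ) − f(z)|. Then h(ε) = ε * ∑ j, |∑ i, v i * M i j| + o(ε) as ε → 0⁺; that is, (h(ε) − ε * ‖Mᵀ.mulVec v‖₁) / ε tends to 0 as ε tends to 0 from the right. (Precise first-order form of Eq. (14) of the paper: the maximal loss change from a lower-layer perturbation with budget ε, propagated through a differentiable layer fraction whose Jacobian at z is M, equals ε times the ℓ1 norm of the pulled-back gradient.) -/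
/-- First-order form of the maximal loss change from a lower-layer perturbation
propagated through a linear layer fraction with Jacobian `M`: if `f` is Fréchet
differentiable at `z` with partial derivatives `v i`, and `h ε` is the supremum of
`|f (z + M.mulVec δ) - f z|` over `‖δ‖∞ ≤ ε`, then
`h ε = ε * ∑ j, |∑ i, v i * M i j| + o(ε)` as `ε → 0⁺`. -/
theorem sup_loss_change_pullback_first_order (m n : ℕ)
    (f : (Fin m → ℝ) → ℝ) (z : Fin m → ℝ)
    (hf : DifferentiableAt ℝ f z) (v : Fin m → ℝ)
    (hv : ∀ i, v i = fderiv ℝ f z (Pi.single i 1))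
    (M : Matrix (Fin m) (Fin n) ℝ) (h : ℝ → ℝ)
    (hh : ∀ ε : ℝ, h ε =
      sSup {y : ℝ | ∃ δ : Fin n → ℝ, (⨆ j, |δ j|) ≤ ε ∧
        y = |f (z + M.mulVec δ) - f z|}) :
    Filter.Tendsto (fun ε : ℝ => (h ε - ε * ∑ j, |∑ i, v i * M i j|) / ε)
      (nhdsWithin 0 (Set.Ioi 0)) (nhds 0) := by
  classical
  set w : Fin n → ℝ := fun j => ∑ i, v i * M i j with hw
  have hL : ∀ δ : Fin n → ℝ, fderiv ℝ f z (M.mulVec δ) = ∑ j, w j * δ j := by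
    intro δ
    have h1 : M.mulVec δ = ∑ i, (M.mulVec δ i) • (Pi.single i (1 : ℝ) : Fin m → ℝ) := by
      simpa using pi_eq_sum_univ' (M.mulVec δ)
    rw [h1, map_sum]
    simp only [map_smul, smul_eq_mul, ← hv, hw, Finset.sum_mul]
    rw [Finset.sum_comm]
    refine Finset.sum_congr rfl fun i _ => ?_
    rw [Matrix.mulVec, dotProduct, Finset.sum_mul]
    exact Finset.sum_congr rfl fun j _ => by ring
  have hg : HasFDerivAt (fun δ : Fin n → ℝ => f (z + M.mulVec δ))
      ((fderiv ℝ f z).comp (LinearMap.toContinuousLinearMap M.mulVecLin)) 0 := by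
    have h2 : HasFDerivAt (fun δ : Fin n → ℝ => z + M.mulVec δ)
        (LinearMap.toContinuousLinearMap M.mulVecLin) 0 :=
      ((LinearMap.toContinuousLinearMap M.mulVecLin).hasFDerivAt (x := 0)).const_add z
    refine HasFDerivAt.comp (g := f) (0 : Fin n → ℝ) ?_ h2
    simpa using hf.hasFDerivAt
  have key : ∀ c : ℝ, 0 < c → ∃ r > 0, ∀ δ : Fin n → ℝ, ‖δ‖ < r →
      |f (z + M.mulVec δ) - f z - ∑ j, w j * δ j| ≤ c * ‖δ‖ := by
    intro c hc
    have h3 := hg.isLittleO.def hc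
    obtain ⟨r, hr, h4⟩ := Metric.eventually_nhds_iff.1 h3
    refine ⟨r, hr, fun δ hδ => ?_⟩
    have h5 := h4 (y := δ) (by simpa using hδ)
    simpa [hL, Real.norm_eq_abs] using h5
  set W : ℝ := ∑ j, |w j| with hW
  rw [Metric.tendsto_nhdsWithin_nhds]
  intro c hc
  obtain ⟨r, hr, hk⟩ := key (c / 2) (by positivity)
  refine ⟨r, hr, fun {ε} hε hεr => ?_⟩
  have hε : 0 < ε := hε
  have hεr : ε < r := by simpa [abs_of_pos hε] using hεr
  have hup : h ε ≤ ε * W + c / 2 * ε ∧ ε * W - c / 2 * ε ≤ h ε := by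
    have hb : ∀ y ∈ {y : ℝ | ∃ δ : Fin n → ℝ, (⨆ j, |δ j|) ≤ ε ∧
        y = |f (z + M.mulVec δ) - f z|}, y ≤ ε * W + c / 2 * ε := by
      rintro y ⟨δ, hδ, rfl⟩
      have hj : ∀ j, |δ j| ≤ ε := fun j =>
        (le_ciSup (f := fun j => |δ j|) (Set.finite_range _).bddAbove j).trans hδ
      have hn : ‖δ‖ ≤ ε := (pi_norm_le_iff_of_nonneg hε.le).2 hj
      have h6 := hk δ (hn.trans_lt hεr)
      have h7 : |∑ j, w j * δ j| ≤ ε * W := by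
        refine (Finset.abs_sum_le_sum_abs _ _).trans ?_
        rw [hW, Finset.mul_sum]
        refine Finset.sum_le_sum fun j _ => ?_
        rw [abs_mul, mul_comm]
        exact mul_le_mul_of_nonneg_right (hj j) (abs_nonneg _)
      have h8 := mul_le_mul_of_nonneg_left hn (by positivity : 0 ≤ c / 2)
      have h9 := abs_sub_abs_le_abs_sub (f (z + M.mulVec δ) - f z) (∑ j, w j * δ j)
      linarith
    rw [hh]
    constructor
    · refine csSup_le ⟨_, 0, ?_, rfl⟩ hb
      exact Real.iSup_le (fun j => by simpa using hε.le) hε.le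
    · set δ : Fin n → ℝ := fun j => if 0 ≤ w j then ε else -ε with hδ
      have hj : ∀ j, |δ j| ≤ ε := fun j => by
        simp only [hδ]; split_ifs <;> simp [abs_of_pos hε]
      have hn : ‖δ‖ ≤ ε := (pi_norm_le_iff_of_nonneg hε.le).2 hj
      have h6 := hk δ (hn.trans_lt hεr)
      have h7 : ∑ j, w j * δ j = ε * W := by
        rw [hW, Finset.mul_sum]
        refine Finset.sum_congr rfl fun j _ => ?_
        simp only [hδ]
        split_ifs with h0
        · rw [abs_of_nonneg h0]; ring
        · rw [abs_of_neg (not_le.1 h0)]; ring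
      have h8 := mul_le_mul_of_nonneg_left hn (by positivity : 0 ≤ c / 2)
      refine le_trans ?_ (le_csSup ⟨_, hb⟩ ⟨δ, Real.iSup_le hj hε.le, rfl⟩)
      have h9 := le_abs_self (f (z + M.mulVec δ) - f z)
      have h10 := (abs_le.1 h6).1
      linarith
  rw [Real.dist_eq, sub_zero, abs_div, abs_of_pos hε, div_lt_iff₀ hε, abs_lt]
  have := mul_pos hc hε
  constructor <;> linarith [hup.1, hup.2]
end
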